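/- Let k ≥ 2 be an integer, ℓ : Fin k → ℝ arm lengths with ℓ i > 0 for all i, and s > 0 a real. Set T₁ = 2·(ℓ (k−1))/s and define f : Set.Icc (0:ℝ) T₁ → S_k(ℓ) by letting f(t) be the point of arm k−1 (the last arm) at distance s·min(t, T₁ − t) from the center O; then f is s-Lipschitz with f(0) = f(T₁) = O, sweeping the last arm out to its endpoint and back. For every 1-Lipschitz map g : Set.Icc (0:ℝ) T₁ → S_k(ℓ), either there exists t ∈ Set.Icc 0 T₁ with f t = g t, or g(T₁) lies on some arm i ≠ k−1 at strictly positive distance from O. (Sweeping an arm of the star clears it: an uncaught robber is afterwards on another arm, away from the center.) -/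

import Mathlib

/-!
The capture argument only uses the way back, `t ∈ [T₁/2, T₁]`. Let `y t` be the last coordinate of
the robber and `c t` the distance of the cop from the center. Then `y ≤ ℓ (k-1) = c` at `T₁/2` and
`y ≥ 0 = c` at `T₁`, so by the intermediate value theorem `y t = c t` for some `t` in this
interval. If the robber is then on the last arm, it is caught. Otherwise `y t = 0`, hence
`c t = 0`, which forces `t = T₁`; the robber is then at time `T₁` on another arm, and either it is
at the center, where the cop stands, or at positive distance from it.
-/

/-- The metric star `S_k(ℓ)` inside `ℝ^k` with the `ℓ¹`-metric. -/
def starSet (k : ℕ) (ℓ : Fin k → ℝ) : Set (PiLp 1 (fun _ : Fin k => ℝ)) :=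
  {x | ∃ i : Fin k, (∀ j : Fin k, j ≠ i → x j = 0) ∧ x i ∈ Set.Icc 0 (ℓ i)}

/-- The point of arm `i` at distance `r` from the center: the vector `r • (Pi.single i 1)`. -/
noncomputable def armPoint (k : ℕ) (i : Fin k) (r : ℝ) : PiLp 1 (fun _ : Fin k => ℝ) :=
  (WithLp.equiv 1 _).symm (r • (Pi.single i 1 : Fin k → ℝ))

/-- `x` lies on arm `i`: all other coordinates vanish. -/
def onArm {k : ℕ} (x : PiLp 1 (fun _ : Fin k => ℝ)) (i : Fin k) : Prop :=
  ∀ j : Fin k, j ≠ i → x j = 0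

lemma armPoint_apply (k : ℕ) (i j : Fin k) (r : ℝ) :
    armPoint k i r j = if j = i then r else 0 := by
  simp [armPoint]

lemma armPoint_zero (k : ℕ) (i : Fin k) : armPoint k i 0 = 0 := by
  ext j
  simp [armPoint_apply]

lemma dist_armPoint (k : ℕ) (i : Fin k) (r r' : ℝ) :
    dist (armPoint k i r) (armPoint k i r') = |r - r'| := by
  rw [PiLp.dist_eq_of_L1, Finset.sum_eq_single i]
  · simp [armPoint_apply, Real.dist_eq]
  · intro j _ hj
    simp [armPoint_apply, hj]
  · simp

lemma eq_armPoint_of_onArm {k : ℕ} {x : PiLp 1 (fun _ : Fin k => ℝ)} {i : Fin k}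
    (h : onArm x i) : x = armPoint k i (x i) := by
  ext j
  rw [armPoint_apply]
  split_ifs with hj
  · rw [hj]
  · exact h j hj

lemma starSet_coord_mem {k : ℕ} {ℓ : Fin k → ℝ} (hℓ : ∀ i, 0 < ℓ i)
    {x : PiLp 1 (fun _ : Fin k => ℝ)} (hx : x ∈ starSet k ℓ) (i : Fin k) :
    x i ∈ Set.Icc 0 (ℓ i) := by
  obtain ⟨m, hm, hI⟩ := hx
  by_cases h : i = m
  · rw [h]
    exact hI
  · rw [hm i h]
    exact ⟨le_rfl, (hℓ i).le⟩

/-- Sweeping an arm of the star clears it: the cop strategy which sweeps the last arm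
(of index `k − 1`) out to its endpoint and back at speed `s`, over the horizon
`T₁ = 2·ℓ(k−1)/s`, is `s`-Lipschitz, starts and ends at the center `O`, and against
every `1`-Lipschitz robber strategy `g` it either captures the robber, or else at time
`T₁` the robber lies on some other arm at strictly positive distance from `O`. -/
theorem star_sweep_clears_arm (k : ℕ) (hk : 2 ≤ k)
    (ℓ : Fin k → ℝ) (hℓ : ∀ i, 0 < ℓ i) (s : ℝ) (hs : 0 < s)
    (T₁ : ℝ) (hT₁ : T₁ = 2 * ℓ ⟨k - 1, by omega⟩ / s)
    (f : Set.Icc (0:ℝ) T₁ → starSet k ℓ)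
    (hf : ∀ t : Set.Icc (0:ℝ) T₁,
      (f t : PiLp 1 (fun _ : Fin k => ℝ)) =
        armPoint k ⟨k - 1, by omega⟩ (s * min (t : ℝ) (T₁ - (t : ℝ))))
    (g : Set.Icc (0:ℝ) T₁ → starSet k ℓ) (hg : LipschitzWith 1 g) :
    (LipschitzWith s.toNNReal f ∧
      (f ⟨0, Set.left_mem_Icc.mpr (by
          rw [hT₁]; have h1 := hℓ ⟨k - 1, by omega⟩; positivity)⟩ :
        PiLp 1 (fun _ : Fin k => ℝ)) = 0 ∧
      (f ⟨T₁, Set.right_mem_Icc.mpr (by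
          rw [hT₁]; have h1 := hℓ ⟨k - 1, by omega⟩; positivity)⟩ :
        PiLp 1 (fun _ : Fin k => ℝ)) = 0) ∧
    ((∃ t : Set.Icc (0:ℝ) T₁, f t = g t) ∨
      (∃ i : Fin k, i ≠ ⟨k - 1, by omega⟩ ∧
        onArm (g ⟨T₁, Set.right_mem_Icc.mpr (by
            rw [hT₁]; have h1 := hℓ ⟨k - 1, by omega⟩; positivity)⟩ :
          PiLp 1 (fun _ : Fin k => ℝ)) i ∧
        0 < dist (g ⟨T₁, Set.right_mem_Icc.mpr (by
            rw [hT₁]; have h1 := hℓ ⟨k - 1, by omega⟩; positivity)⟩ :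
          PiLp 1 (fun _ : Fin k => ℝ)) 0)) := by
  have hL := hℓ ⟨k - 1, by omega⟩
  generalize (⟨k - 1, by omega⟩ : Fin k) = L at *
  have hTpos : 0 < T₁ := by rw [hT₁]; positivity
  have hsT : s * T₁ = 2 * ℓ L := by rw [hT₁]; field_simp
  refine ⟨⟨?_, ?_, ?_⟩, ?_⟩
  · refine LipschitzWith.of_dist_le_mul fun t u => ?_
    rw [Subtype.dist_eq, hf, hf, dist_armPoint, ← mul_sub, abs_mul, abs_of_pos hs,
      Real.coe_toNNReal _ hs.le, Subtype.dist_eq, Real.dist_eq]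
    refine mul_le_mul_of_nonneg_left ?_ hs.le
    refine (abs_min_sub_min_le_max _ _ _ _).trans (max_le le_rfl (le_of_eq ?_))
    rw [sub_sub_sub_cancel_left, abs_sub_comm]
  · rw [hf]
    simp [hTpos.le, armPoint_zero]
  · rw [hf]
    simp [hTpos.le, armPoint_zero]
  have hgc : Continuous fun t : Set.Icc (0:ℝ) T₁ => (g t : PiLp 1 (fun _ : Fin k => ℝ)) L :=
    (PiLp.continuous_apply 1 _ L).comp (continuous_subtype_val.comp hg.continuous)
  -- `Set.projIcc` extends the robber's coordinate to `ℝ`, where the interval `[T₁/2, T₁]` lives.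
  have hc : Continuous fun t : ℝ =>
      (g (Set.projIcc 0 T₁ hTpos.le t) : PiLp 1 (fun _ : Fin k => ℝ)) L - s * (T₁ - t) :=
    (hgc.comp continuous_projIcc).sub (by fun_prop)
  obtain ⟨t, ⟨ht1, ht2⟩, ht⟩ := intermediate_value_Icc (show T₁ / 2 ≤ T₁ by linarith)
    hc.continuousOn (show (0:ℝ) ∈ Set.Icc _ _ from
      ⟨by have := (starSet_coord_mem hℓ (g (Set.projIcc 0 T₁ hTpos.le (T₁ / 2))).2 L).2
          dsimp only
          linarith,
       by have := (starSet_coord_mem hℓ (g (Set.projIcc 0 T₁ hTpos.le T₁)).2 L).1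
          dsimp only
          linarith⟩)
  have htI : t ∈ Set.Icc 0 T₁ := ⟨by linarith, ht2⟩
  simp only [Set.projIcc_of_mem hTpos.le htI] at ht
  have hft : (f ⟨t, htI⟩ : PiLp 1 (fun _ : Fin k => ℝ)) = armPoint k L (s * (T₁ - t)) := by
    rw [hf, min_eq_right (by dsimp only; linarith)]
  obtain ⟨i, hi, -⟩ := (g ⟨t, htI⟩).2
  by_cases hiL : i = L
  · subst hiL
    left
    refine ⟨⟨t, htI⟩, Subtype.ext ?_⟩
    rw [hft, eq_armPoint_of_onArm hi, sub_eq_zero.mp ht]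
  · have htT : t = T₁ := by
      rw [hi L (Ne.symm hiL), zero_sub, neg_eq_zero, mul_eq_zero] at ht
      rcases ht with h | h <;> linarith
    subst htT
    by_cases hz : (g ⟨t, htI⟩ : PiLp 1 (fun _ : Fin k => ℝ)) = 0
    · left
      refine ⟨⟨t, htI⟩, Subtype.ext ?_⟩
      rw [hft, hz, sub_self, mul_zero, armPoint_zero]
    · exact Or.inr ⟨i, hiL, hi, dist_pos.mpr hz⟩
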